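/- Mehler's formula: for all real z₁, z₂ and all real w with |w| < 1/2, ∑_{m=0}^∞ (w^m / m!) · H_m(z₁) · H_m(z₂) = (1 − 4w²)^{−1/2} · exp( (2w (z₁² + z₂²) − 2 z₁ z₂) / (2w − (2w)^{−1}) ), where H_m denotes the physicists' Hermite polynomial of degree m; moreover the series converges absolutely. -/

import Mathlib

/-!
The weight `e^{-x²}` is the Fourier transform of a Gaussian, so `H_m(x)` is
`√π e^{x²} ∫ (2πit)^m e^{-π²t² - 2πitx} dt` (`physHermite_eq_integral`). In the product
`H_m(z₁) H_m(z₂)`, a double integral over `(t, s)`, the index `m` then enters only through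
`(2πit · 2πis)^m`, and summing against `w^m / m!` gives `e^{-4π²wts}`. For `|w| < 1/2` the sum may
be taken under the integral, because `4|w||t||s| ≤ 2|w|(t² + s²)` is absorbed by the Gaussian
weight (`hasSum_integral_mehlerKernel`). What remains is a two-dimensional Gaussian integral,
computed by completing the square twice (`integral_mehlerKernel`). Absolute convergence comes for
free, since a summable real series is absolutely summable.
-/

/-- The physicists' Hermite polynomial `H_n(x) = (−1)^n e^{x²} (d/dx)^n e^{−x²}`. -/
noncomputable def physHermite (n : ℕ) (x : ℝ) : ℝ :=
  (-1 : ℝ) ^ n * Real.exp (x ^ 2) * iteratedDeriv n (fun y : ℝ => Real.exp (-y ^ 2)) x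

/-- The Gaussian-weighted character `e^{-π²t² - 2πitx}`. The width `π²` matches Mathlib's
normalisation of the Fourier transform, for which `∫ mehlerKernel x t dt = e^{-x²} / √π`. -/
noncomputable def mehlerKernel (x t : ℝ) : ℂ :=
  Complex.exp (-Real.pi ^ 2 * t ^ 2 - 2 * Real.pi * t * x * Complex.I)

open MeasureTheory FourierTransform in
/-- Since `e^{-x²} = √π 𝓕(e^{-π²t²})(x)`, each derivative of `e^{-x²}` brings down a factor
`-2πit` under the Fourier integral. The sign `(-1)^m` is absorbed here into `(2πit)^m`. -/
theorem physHermite_eq_integral (m : ℕ) (x : ℝ) :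
    (physHermite m x : ℂ) = (Real.sqrt Real.pi : ℂ) * Real.exp (x ^ 2) *
      ∫ t : ℝ, (2 * Real.pi * Complex.I * t) ^ m * mehlerKernel x t := by
  have hπ : (Real.pi : ℂ) ≠ 0 := by exact_mod_cast Real.pi_ne_zero
  set f : ℝ → ℂ := fun t => Complex.exp (-Real.pi * Real.pi * (t : ℂ) ^ 2) with hf
  have hft : 𝓕 f = fun t : ℝ =>
      ((Real.sqrt Real.pi : ℝ) : ℂ)⁻¹ * ((Real.exp (-t ^ 2) : ℝ) : ℂ) := by
    have h := fourier_gaussian_pi (b := (Real.pi : ℂ)) (by simpa using Real.pi_pos)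
    rw [hf, h]
    funext t
    rw [Real.sqrt_eq_rpow, Complex.ofReal_cpow Real.pi_pos.le]
    push_cast
    rw [one_div, neg_div, div_self hπ]
    simp
  have hint : ∀ n : ℕ, Integrable (fun t : ℝ => t ^ n • f t) := by
    intro n
    have h := integrable_rpow_mul_exp_neg_mul_sq (b := Real.pi ^ 2) (by positivity)
      (s := n) (by have : (0 : ℝ) ≤ n := n.cast_nonneg
                   linarith)
    refine (h.ofReal (𝕜 := ℂ)).congr (Filter.Eventually.of_forall fun t => ?_)
    simp only [hf, Real.rpow_natCast, Complex.real_smul]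
    -- `Integrable.ofReal` produces the `RCLike` coercion, which `push_cast` does not see through.
    change ((t ^ n * Real.exp (-Real.pi ^ 2 * t ^ 2) : ℝ) : ℂ) = _
    push_cast
    congr 2
    ring
  have hd := Real.iteratedDeriv_fourier (f := f) (N := ⊤) (n := m) (fun n _ => hint n) le_top
  -- The iterated derivatives of the complex-valued transform are those of the real `e^{-x²}`.
  have hg : ContDiff ℝ (⊤ : ℕ∞) (fun y : ℝ => Real.exp (-y ^ 2)) := by fun_prop
  have hre : ∀ n : ℕ, iteratedDeriv n (𝓕 f) = fun t : ℝ =>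
      ((Real.sqrt Real.pi : ℝ) : ℂ)⁻¹ *
        ((iteratedDeriv n (fun y : ℝ => Real.exp (-y ^ 2)) t : ℝ) : ℂ) := by
    intro n
    induction n with
    | zero => simpa using hft
    | succ n ih =>
      rw [iteratedDeriv_succ, ih]
      funext t
      have hdt : DifferentiableAt ℝ (iteratedDeriv n (fun y : ℝ => Real.exp (-y ^ 2))) t :=
        (hg.differentiable_iteratedDeriv n (by exact_mod_cast WithTop.coe_lt_top n)) t
      rw [iteratedDeriv_succ]
      exact (hdt.hasDerivAt.ofReal_comp.const_mul _).deriv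
  have hs : ((Real.sqrt Real.pi : ℝ) : ℂ) ≠ 0 := by
    exact_mod_cast (Real.sqrt_pos.2 Real.pi_pos).ne'
  have key := congrFun ((hre m).symm.trans hd) x
  rw [Real.fourier_real_eq_integral_exp_smul] at key
  have hI : (∫ t : ℝ, (2 * Real.pi * Complex.I * t) ^ m * mehlerKernel x t) = (-1) ^ m *
      ((Real.sqrt Real.pi : ℝ) : ℂ)⁻¹ *
        ((iteratedDeriv m (fun y : ℝ => Real.exp (-y ^ 2)) x : ℝ) : ℂ) := by
    rw [mul_assoc ((-1 : ℂ) ^ m), key, ← integral_const_mul]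
    congr 1
    funext t
    simp only [smul_eq_mul, hf, mehlerKernel]
    rw [mul_left_comm (Complex.exp _), ← Complex.exp_add, ← mul_assoc, ← mul_pow]
    congr 2
    · ring
    · push_cast; ring
  rw [hI, physHermite]
  push_cast
  field_simp

open MeasureTheory in
theorem integral_mehlerKernel (x y w : ℝ) (hw : 0 < 1 - 4 * w ^ 2) :
    ∫ t : ℝ, ∫ s : ℝ, Complex.exp (-4 * Real.pi ^ 2 * w * t * s) *
        (mehlerKernel x t * mehlerKernel y s) =
      (((Real.pi * Real.sqrt (1 - 4 * w ^ 2))⁻¹ *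
        Real.exp (-y ^ 2 - (2 * w * y - x) ^ 2 / (1 - 4 * w ^ 2)) : ℝ) : ℂ) := by
  have hp := Real.pi_pos
  have hπ : (Real.pi : ℂ) ≠ 0 := by exact_mod_cast hp.ne'
  have hwc : (1 - 4 * (w : ℂ) ^ 2) ≠ 0 := by exact_mod_cast hw.ne'
  have hsq : ∀ a : ℝ, 0 ≤ a → ((a : ℂ)) ^ (1 / 2 : ℂ) = ((Real.sqrt a : ℝ) : ℂ) := by
    intro a ha
    rw [Real.sqrt_eq_rpow, Complex.ofReal_cpow ha]
    push_cast; rfl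
  -- The inner integral over `s` leaves a Gaussian in `t` of leading coefficient `-π²(1 - 4w²)`.
  have inner : ∀ t : ℝ, ∫ s : ℝ, Complex.exp (-4 * Real.pi ^ 2 * w * t * s) *
        (mehlerKernel x t * mehlerKernel y s) = ((Real.sqrt (1 / Real.pi) : ℝ) : ℂ) *
      Complex.exp (((-Real.pi ^ 2 * (1 - 4 * w ^ 2) : ℝ) : ℂ) * t ^ 2 +
        ((4 * Real.pi * w * y - 2 * Real.pi * x) * Complex.I) * t + (-y ^ 2 : ℂ)) := by
    intro t
    have h := integral_cexp_quadratic (b := ((-Real.pi ^ 2 : ℝ) : ℂ))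
      (by rw [Complex.ofReal_re]; nlinarith)
      (-4 * Real.pi ^ 2 * w * t - 2 * Real.pi * y * Complex.I)
      (-Real.pi ^ 2 * t ^ 2 - 2 * Real.pi * t * x * Complex.I)
    rw [← hsq _ (by positivity)]
    convert h using 2
    · funext s
      simp only [mehlerKernel]
      rw [← Complex.exp_add, ← Complex.exp_add]
      congr 1
      push_cast; ring
    · congr 1
      push_cast; field_simp
    · congr 1
      push_cast
      field_simp
      ring_nf
      simp only [Complex.I_sq]
      ring
  simp_rw [inner]
  rw [integral_const_mul, integral_cexp_quadratic (by
    rw [Complex.ofReal_re]; nlinarith [mul_pos (pow_pos hp 2) hw])]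
  have e1 : (Real.pi / -((-Real.pi ^ 2 * (1 - 4 * w ^ 2) : ℝ) : ℂ)) =
      ((1 / Real.pi / (1 - 4 * w ^ 2) : ℝ) : ℂ) := by
    push_cast; field_simp
  have e2 : (-y ^ 2 : ℂ) - ((4 * Real.pi * w * y - 2 * Real.pi * x) * Complex.I) ^ 2 /
      (4 * ((-Real.pi ^ 2 * (1 - 4 * w ^ 2) : ℝ) : ℂ)) =
      ((-y ^ 2 - (2 * w * y - x) ^ 2 / (1 - 4 * w ^ 2) : ℝ) : ℂ) := by
    push_cast
    rw [mul_pow, Complex.I_sq]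
    generalize (1 - 4 * (w : ℂ) ^ 2) = D at hwc
    field_simp
    ring
  have e3 : Real.sqrt (1 / Real.pi) * Real.sqrt (1 / Real.pi / (1 - 4 * w ^ 2)) =
      (Real.pi * Real.sqrt (1 - 4 * w ^ 2))⁻¹ := by
    rw [Real.sqrt_div' _ hw.le, mul_div_assoc', Real.mul_self_sqrt (by positivity), mul_inv,
      one_div]
    rfl
  rw [e1, e2, hsq _ (by positivity), ← mul_assoc, ← Complex.ofReal_mul, e3]
  push_cast
  rfl

open MeasureTheory in
/-- Termwise integration of the exponential series of `e^{-4π²wts}`, dominated by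
`e^{4π²|w||t||s| - π²t² - π²s²} ≤ e^{-π²(1 - 2|w|)(t² + s²)}`. -/
theorem hasSum_integral_mehlerKernel (x y w : ℝ) (hw : |w| < 1 / 2) :
    HasSum (fun m : ℕ => ((w : ℂ) ^ m / (Nat.factorial m : ℂ)) *
        ((∫ t : ℝ, (2 * Real.pi * Complex.I * t) ^ m * mehlerKernel x t) *
          ∫ s : ℝ, (2 * Real.pi * Complex.I * s) ^ m * mehlerKernel y s))
      (∫ t : ℝ, ∫ s : ℝ, Complex.exp (-4 * Real.pi ^ 2 * w * t * s) *
        (mehlerKernel x t * mehlerKernel y s)) := by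
  have hp := Real.pi_pos
  have hK : ∀ x t : ℝ, ‖mehlerKernel x t‖ = Real.exp (-Real.pi ^ 2 * t ^ 2) := by
    intro x t
    rw [mehlerKernel, Complex.norm_exp]
    congr 1
    simp [← Complex.ofReal_pow]
  have hKc : ∀ x : ℝ, Continuous (mehlerKernel x) := by
    intro x; unfold mehlerKernel; fun_prop
  set G : ℝ × ℝ → ℂ := fun p => Complex.exp (-4 * Real.pi ^ 2 * w * p.1 * p.2) *
        (mehlerKernel x p.1 * mehlerKernel y p.2) with hG
  set B : ℝ × ℝ → ℝ := fun p => Real.exp (4 * Real.pi ^ 2 * |w| * |p.1| * |p.2|) *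
        (Real.exp (-Real.pi ^ 2 * p.1 ^ 2) * Real.exp (-Real.pi ^ 2 * p.2 ^ 2)) with hB
  have hKx := hKc x
  have hKy := hKc y
  have hGc : Continuous G := by
    rw [hG]; fun_prop
  have hBc : Continuous B := by
    rw [hB]; fun_prop
  have hBi : Integrable B (volume.prod volume) := by
    have hb : 0 < Real.pi ^ 2 * (1 - 2 * |w|) := by
      have : 0 < 1 - 2 * |w| := by linarith
      positivity
    have h := (integrable_exp_neg_mul_sq hb).mul_prod (integrable_exp_neg_mul_sq hb)
    refine h.mono' hBc.aestronglyMeasurable (Filter.Eventually.of_forall fun p => ?_)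
    simp only [hB]
    rw [Real.norm_of_nonneg (by positivity), ← Real.exp_add, ← Real.exp_add, ← Real.exp_add]
    apply Real.exp_le_exp.2
    -- `2|t||s| ≤ t² + s²`, scaled by `2π²|w|`.
    have := mul_nonneg (mul_nonneg (sq_nonneg Real.pi) (abs_nonneg w))
      (sq_nonneg (|p.1| - |p.2|))
    have h1 := sq_abs p.1
    have h2 := sq_abs p.2
    nlinarith
  have hGi : Integrable G (volume.prod volume) := by
    refine hBi.mono' hGc.aestronglyMeasurable (Filter.Eventually.of_forall fun p => ?_)
    simp only [hG, hB]
    rw [norm_mul, norm_mul, hK, hK, Complex.norm_exp]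
    gcongr
    have : (-4 * Real.pi ^ 2 * w * p.1 * p.2 : ℂ).re = -4 * Real.pi ^ 2 * w * p.1 * p.2 := by
      rw [← Complex.ofReal_re (-4 * Real.pi ^ 2 * w * p.1 * p.2)]
      push_cast; rfl
    rw [this]
    calc -4 * Real.pi ^ 2 * w * p.1 * p.2 = 4 * Real.pi ^ 2 * (-(w * p.1 * p.2)) := by ring
      _ ≤ 4 * Real.pi ^ 2 * |w * p.1 * p.2| := by gcongr; exact neg_le_abs _
      _ = _ := by rw [abs_mul, abs_mul]; ring
  have hexp : ∀ a b : ℝ, HasSum (fun m : ℕ => (4 * Real.pi ^ 2 * |w| * |a| * |b|) ^ m /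
      (Nat.factorial m : ℝ) * (Real.exp (-Real.pi ^ 2 * a ^ 2) * Real.exp (-Real.pi ^ 2 * b ^ 2)))
      (B (a, b)) := by
    intro a b
    have h := NormedSpace.expSeries_div_hasSum_exp (𝔸 := ℝ) (4 * Real.pi ^ 2 * |w| * |a| * |b|)
    rw [← Real.exp_eq_exp_ℝ] at h
    exact h.mul_right _
  have main := hasSum_integral_of_dominated_convergence (μ := (volume : Measure ℝ).prod volume)
    (F := fun (m : ℕ) (p : ℝ × ℝ) => ((w : ℂ) ^ m / (Nat.factorial m : ℂ)) *
      (((2 * Real.pi * Complex.I * p.1) ^ m * mehlerKernel x p.1) *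
        ((2 * Real.pi * Complex.I * p.2) ^ m * mehlerKernel y p.2))) (f := G)
    (fun (m : ℕ) (p : ℝ × ℝ) => (4 * Real.pi ^ 2 * |w| * |p.1| * |p.2|) ^ m /
      (Nat.factorial m : ℝ) *
        (Real.exp (-Real.pi ^ 2 * p.1 ^ 2) * Real.exp (-Real.pi ^ 2 * p.2 ^ 2)))
    (fun m => Continuous.aestronglyMeasurable (by fun_prop))
    (fun m => Filter.Eventually.of_forall fun p => by
      simp only [norm_mul, norm_div, norm_pow, hK, Complex.norm_real, Complex.norm_I,
        Complex.norm_natCast, Complex.norm_ofNat, Real.norm_eq_abs, abs_of_pos hp]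
      apply le_of_eq
      rw [show (4 : ℝ) = 2 * 2 by norm_num]
      simp only [mul_pow]
      ring)
    (Filter.Eventually.of_forall fun p => (hexp p.1 p.2).summable)
    (hBi.congr (Filter.Eventually.of_forall fun p => ((hexp p.1 p.2).tsum_eq).symm))
    (Filter.Eventually.of_forall fun p => by
      have h := NormedSpace.expSeries_div_hasSum_exp (𝔸 := ℂ) (-4 * Real.pi ^ 2 * w * p.1 * p.2)
      rw [← Complex.exp_eq_exp_ℂ] at h
      convert! h.mul_right (mehlerKernel x p.1 * mehlerKernel y p.2) using 2 with m
      have : (-4 * Real.pi ^ 2 * w * p.1 * p.2 : ℂ) =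
          w * (2 * Real.pi * Complex.I * p.1) * (2 * Real.pi * Complex.I * p.2) := by
        ring_nf
        simp only [Complex.I_sq]
        ring
      rw [this]
      simp only [mul_pow]
      ring)
  rw [integral_prod _ hGi] at main
  convert! main using 2 with m
  rw [integral_const_mul, integral_prod_mul
    (fun t : ℝ => (2 * Real.pi * Complex.I * t) ^ m * mehlerKernel x t)
    (fun t : ℝ => (2 * Real.pi * Complex.I * t) ^ m * mehlerKernel y t)]

/-- Mehler's formula: for `|w| < 1/2`,
`∑_m (w^m/m!) H_m(z₁) H_m(z₂) = (1−4w²)^{−1/2} exp((2w(z₁²+z₂²) − 2z₁z₂)/(2w − (2w)⁻¹))`,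
with the series converging absolutely. -/
theorem mehler_formula (z₁ z₂ w : ℝ) (hw : |w| < 1 / 2) :
    Summable (fun m : ℕ =>
      |w ^ m / (Nat.factorial m : ℝ) * physHermite m z₁ * physHermite m z₂|) ∧
    (∑' m : ℕ, w ^ m / (Nat.factorial m : ℝ) * physHermite m z₁ * physHermite m z₂) =
      (Real.sqrt (1 - 4 * w ^ 2))⁻¹ *
        Real.exp ((2 * w * (z₁ ^ 2 + z₂ ^ 2) - 2 * z₁ * z₂) / (2 * w - (2 * w)⁻¹)) := by
  have hw' : 0 < 1 - 4 * w ^ 2 := by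
    have h1 := sq_abs w
    nlinarith [abs_nonneg w]
  have hp := Real.pi_pos
  have hs : HasSum (fun m : ℕ =>
      w ^ m / (Nat.factorial m : ℝ) * physHermite m z₁ * physHermite m z₂)
      ((Real.sqrt (1 - 4 * w ^ 2))⁻¹ *
        Real.exp ((2 * w * (z₁ ^ 2 + z₂ ^ 2) - 2 * z₁ * z₂) / (2 * w - (2 * w)⁻¹))) := by
    rw [← Complex.hasSum_ofReal]
    have h := (hasSum_integral_mehlerKernel z₁ z₂ w hw).mul_left
      (((Real.pi * (Real.exp (z₁ ^ 2) * Real.exp (z₂ ^ 2)) : ℝ) : ℂ))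
    rw [integral_mehlerKernel _ _ _ hw'] at h
    convert! h using 1
    · funext m
      push_cast
      rw [physHermite_eq_integral, physHermite_eq_integral]
      have hsp : ((Real.sqrt Real.pi : ℝ) : ℂ) * ((Real.sqrt Real.pi : ℝ) : ℂ) = Real.pi := by
        rw [← Complex.ofReal_mul, Real.mul_self_sqrt hp.le]
      push_cast
      rw [← hsp]
      ring
    · rw [← Complex.ofReal_mul]
      congr 1
      have hexp : (2 * w * (z₁ ^ 2 + z₂ ^ 2) - 2 * z₁ * z₂) / (2 * w - (2 * w)⁻¹) =
          z₁ ^ 2 + z₂ ^ 2 + (-z₂ ^ 2 - (2 * w * z₂ - z₁) ^ 2 / (1 - 4 * w ^ 2)) := by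
        -- At `w = 0` the conventions `0⁻¹ = 0` and `a / 0 = 0` make the exponent `0`,
        -- which is its limiting value.
        rcases eq_or_ne w 0 with rfl | h0
        · simp
          ring
        · have hne : 2 * w - (2 * w)⁻¹ = -(1 - 4 * w ^ 2) / (2 * w) := by
            field_simp
            ring
          have := hw'.ne'
          rw [hne]
          set D := 1 - 4 * w ^ 2 with hD
          field_simp
          rw [hD]
          ring
      rw [hexp, Real.exp_add, Real.exp_add, mul_inv]
      field_simp
  exact ⟨hs.summable.abs, hs.tsum_eq⟩
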